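/- arXiv:0711.1913 — 11 statements merged into one kernel-verified Lean document; each statement's English description precedes it below -/
import Mathlib

section
/- Let d ≥ 1, let Ψ : ℝ^d → ℂ be measurable with Re Ψ(ξ) ≥ 0 for every ξ, and let f : ℝ^d → [0,∞) be measurable. Then for every t ≥ 0 and every λ > 0, ((1 − e^{−2t/λ})/2) · ∫_{ℝ^d} f(ξ)/((1/λ) + Re Ψ(ξ)) dξ ≤ ∫_0^t ∫_{ℝ^d} e^{−2s·Re Ψ(ξ)} f(ξ) dξ ds ≤ (e^{2t/λ}/2) · ∫_{ℝ^d} f(ξ)/((1/λ) + Re Ψ(ξ)) dξ, where all integrals are taken in the extended nonnegative sense. -/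
open MeasureTheory

lemma lint_exp (t b : ℝ) (ht : 0 ≤ t) (hb : 0 < b) :
    ∫⁻ s in Set.Ioc (0 : ℝ) t, ENNReal.ofReal (Real.exp (-2 * s * b))
      = ENNReal.ofReal ((1 - Real.exp (-2 * t * b)) / (2 * b)) := by
  have hc : Continuous (fun s : ℝ => Real.exp (-2 * s * b)) := by fun_prop
  rw [← ofReal_integral_eq_lintegral_ofReal]
  · congr 1
    rw [← intervalIntegral.integral_of_le ht]
    have hd : ∀ x ∈ Set.uIcc 0 t, HasDerivAt
        (fun s : ℝ => -(Real.exp (-2 * s * b)) / (2 * b)) (Real.exp (-2 * x * b)) x := by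
      intro x _
      have h1 : HasDerivAt (fun s : ℝ => -2 * s * b) (-2 * 1 * b) x :=
        ((hasDerivAt_id x).const_mul (-2)).mul_const b
      have h2 := (h1.exp.neg).div_const (2 * b)
      refine h2.congr_deriv ?_
      rw [div_eq_iff (by positivity)]
      ring
    rw [intervalIntegral.integral_eq_sub_of_hasDerivAt hd (hc.intervalIntegrable _ _)]
    simp
    ring
  · exact (hc.integrableOn_Icc (a := 0) (b := t)).mono_set Set.Ioc_subset_Icc_self
  · exact Filter.Eventually.of_forall fun s => (Real.exp_pos _).le

lemma pt_bounds (t lam a y : ℝ) (ht : 0 ≤ t) (hlam : 0 < lam) (ha : 0 ≤ a) (hy : 0 ≤ y) :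
    ENNReal.ofReal ((1 - Real.exp (-2 * t / lam)) / 2) * ENNReal.ofReal (y / (1 / lam + a))
      ≤ ∫⁻ s in Set.Ioc (0 : ℝ) t, ENNReal.ofReal (Real.exp (-2 * s * a) * y) ∧
    (∫⁻ s in Set.Ioc (0 : ℝ) t, ENNReal.ofReal (Real.exp (-2 * s * a) * y))
      ≤ ENNReal.ofReal (Real.exp (2 * t / lam) / 2) * ENNReal.ofReal (y / (1 / lam + a)) := by
  have hl : 0 < 1 / lam := by positivity
  have hb : 0 < 1 / lam + a := by positivity
  have key := lint_exp t (1 / lam + a) ht hb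
  have e1 : -2 * t / lam = -2 * t * (1 / lam) := by ring
  have e2 : 2 * t / lam = 2 * t * (1 / lam) := by ring
  rw [e1, e2]
  generalize 1 / lam = c at *
  have hE : Real.exp (-2 * t * c) ≤ 1 := Real.exp_le_one_iff.2 (by nlinarith)
  constructor
  · calc _ = ENNReal.ofReal ((1 - Real.exp (-2 * t * c)) / (2 * (c + a)) * y) := by
          rw [← ENNReal.ofReal_mul (by linarith)]
          congr 1
          field_simp
      _ ≤ ENNReal.ofReal ((1 - Real.exp (-2 * t * (c + a))) / (2 * (c + a)) * y) := by
          have : Real.exp (-2 * t * (c + a)) ≤ Real.exp (-2 * t * c) :=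
            Real.exp_le_exp.2 (by nlinarith [mul_nonneg ht ha])
          gcongr
      _ = (∫⁻ s in Set.Ioc (0 : ℝ) t, ENNReal.ofReal (Real.exp (-2 * s * (c + a))))
            * ENNReal.ofReal y := by
          rw [key, ENNReal.ofReal_mul' hy]
      _ = ∫⁻ s in Set.Ioc (0 : ℝ) t, ENNReal.ofReal (Real.exp (-2 * s * (c + a)) * y) := by
          rw [← lintegral_mul_const' _ _ ENNReal.ofReal_ne_top]
          simp_rw [ENNReal.ofReal_mul' hy]
      _ ≤ _ := by
          refine setLIntegral_mono' measurableSet_Ioc fun s hs => ?_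
          have := mul_nonneg hs.1.le hl.le
          exact ENNReal.ofReal_le_ofReal
            (mul_le_mul_of_nonneg_right (Real.exp_le_exp.2 (by nlinarith)) hy)
  · calc _ ≤ ∫⁻ s in Set.Ioc (0 : ℝ) t, ENNReal.ofReal (Real.exp (-2 * s * (c + a)))
              * ENNReal.ofReal (Real.exp (2 * t * c) * y) := by
          refine setLIntegral_mono' measurableSet_Ioc fun s hs => ?_
          rw [← ENNReal.ofReal_mul (Real.exp_pos _).le, ← mul_assoc, ← Real.exp_add]
          have := mul_le_mul_of_nonneg_right hs.2 hl.le
          exact ENNReal.ofReal_le_ofReal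
            (mul_le_mul_of_nonneg_right (Real.exp_le_exp.2 (by nlinarith)) hy)
      _ = ENNReal.ofReal ((1 - Real.exp (-2 * t * (c + a))) / (2 * (c + a)))
              * ENNReal.ofReal (Real.exp (2 * t * c) * y) := by
          rw [lintegral_mul_const' _ _ ENNReal.ofReal_ne_top, key]
      _ ≤ ENNReal.ofReal (1 / (2 * (c + a))) * ENNReal.ofReal (Real.exp (2 * t * c) * y) := by
          have := Real.exp_pos (-2 * t * (c + a))
          gcongr
          linarith
      _ = _ := by
          rw [← ENNReal.ofReal_mul (by positivity), ← ENNReal.ofReal_mul (by positivity)]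
          congr 1
          field_simp

/-- Proposition 3.1 (heat quasi-isometry), analytic content: for measurable
`Ψ : ℝ^d → ℂ` with `Re Ψ ≥ 0` and measurable `f ≥ 0`, for every `t ≥ 0` and `λ > 0`,
`((1 − e^{−2t/λ})/2) ⬝ ∫ f/((1/λ) + Re Ψ) ≤ ∫_0^t ∫ e^{−2s Re Ψ} f dξ ds
  ≤ (e^{2t/λ}/2) ⬝ ∫ f/((1/λ) + Re Ψ)`. -/
theorem stmt_0 (d : ℕ) (hd : 1 ≤ d)
    (Ψ : EuclideanSpace ℝ (Fin d) → ℂ) (hΨ : Measurable Ψ)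
    (hre : ∀ ξ, 0 ≤ (Ψ ξ).re)
    (f : EuclideanSpace ℝ (Fin d) → ℝ) (hf : Measurable f) (hf0 : ∀ ξ, 0 ≤ f ξ)
    (t lam : ℝ) (ht : 0 ≤ t) (hlam : 0 < lam) :
    ENNReal.ofReal ((1 - Real.exp (-2 * t / lam)) / 2) *
        (∫⁻ ξ, ENNReal.ofReal (f ξ / (1 / lam + (Ψ ξ).re)))
      ≤ ∫⁻ s in Set.Ioc (0 : ℝ) t,
          ∫⁻ ξ, ENNReal.ofReal (Real.exp (-2 * s * (Ψ ξ).re) * f ξ) ∧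
    (∫⁻ s in Set.Ioc (0 : ℝ) t,
        ∫⁻ ξ, ENNReal.ofReal (Real.exp (-2 * s * (Ψ ξ).re) * f ξ))
      ≤ ENNReal.ofReal (Real.exp (2 * t / lam) / 2) *
          (∫⁻ ξ, ENNReal.ofReal (f ξ / (1 / lam + (Ψ ξ).re))) := by
  have hm : AEMeasurable (Function.uncurry fun (s : ℝ) (ξ : EuclideanSpace ℝ (Fin d)) =>
      ENNReal.ofReal (Real.exp (-2 * s * (Ψ ξ).re) * f ξ))
      ((volume.restrict (Set.Ioc (0 : ℝ) t)).prod volume) := by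
    apply Measurable.aemeasurable
    unfold Function.uncurry
    have h1 : Measurable fun p : ℝ × EuclideanSpace ℝ (Fin d) => (Ψ p.2).re :=
      Complex.measurable_re.comp (hΨ.comp measurable_snd)
    have h2 : Measurable fun p : ℝ × EuclideanSpace ℝ (Fin d) => f p.2 :=
      hf.comp measurable_snd
    fun_prop
  rw [lintegral_lintegral_swap hm, ← lintegral_const_mul' _ _ ENNReal.ofReal_ne_top,
    ← lintegral_const_mul' _ _ ENNReal.ofReal_ne_top]
  exact ⟨lintegral_mono fun ξ => (pt_bounds t lam _ _ ht hlam (hre ξ) (hf0 ξ)).1,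
    lintegral_mono fun ξ => (pt_bounds t lam _ _ ht hlam (hre ξ) (hf0 ξ)).2⟩
end

section
/- Let d ≥ 1, let Ψ : ℝ^d → ℂ be measurable with Re Ψ(ξ) ≥ 0 for every ξ, and let f : ℝ^d → [0,∞) be measurable. Then for every t > 0, (1/3) · ∫_{ℝ^d} f(ξ)/((1/t) + Re Ψ(ξ)) dξ ≤ ∫_0^t ∫_{ℝ^d} e^{−2s·Re Ψ(ξ)} f(ξ) dξ ds ≤ 4 · ∫_{ℝ^d} f(ξ)/((1/t) + Re Ψ(ξ)) dξ. -/
open MeasureTheory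

lemma aux_bounds (a t : ℝ) (ha : 0 ≤ a) (ht : 0 < t) :
    1 / 3 * (1 / t + a)⁻¹ ≤ ∫ s in (0 : ℝ)..t, Real.exp (-2 * s * a) ∧
    (∫ s in (0 : ℝ)..t, Real.exp (-2 * s * a)) ≤ 4 * (1 / t + a)⁻¹ := by
  have hc : Continuous fun s : ℝ => Real.exp (-2 * s * a) := by fun_prop
  have h1 : 2 * a * (∫ s in (0 : ℝ)..t, Real.exp (-2 * s * a)) = 1 - Real.exp (-2 * t * a) := by
    rw [← intervalIntegral.integral_const_mul]
    have := intervalIntegral.integral_eq_sub_of_hasDerivAt (a := 0) (b := t)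
      (f := fun s : ℝ => - Real.exp (-2 * s * a))
      (f' := fun s => 2 * a * Real.exp (-2 * s * a)) (fun x _ => by
        have h := ((((hasDerivAt_id x).const_mul (-2)).mul_const a).exp).neg
        refine HasDerivAt.congr_deriv h ?_
        simp only [id]
        ring) ((continuous_const.mul hc).intervalIntegrable _ _)
    rw [this]
    simp
    ring
  have h2 : (∫ s in (0 : ℝ)..t, Real.exp (-2 * s * a)) ≤ t := by
    have := intervalIntegral.integral_mono_on (μ := volume) ht.le (hc.intervalIntegrable 0 t)
      (continuous_const.intervalIntegrable 0 t) (g := fun _ => (1 : ℝ)) (fun x hx => by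
        rw [Real.exp_le_one_iff]
        nlinarith [mul_nonneg hx.1 ha])
    simpa using this
  have h3 : t * Real.exp (-2 * t * a) ≤ ∫ s in (0 : ℝ)..t, Real.exp (-2 * s * a) := by
    have := intervalIntegral.integral_mono_on (μ := volume) ht.le
      (continuous_const.intervalIntegrable 0 t) (hc.intervalIntegrable 0 t)
      (f := fun _ => Real.exp (-2 * t * a)) (fun x hx => by
        rw [Real.exp_le_exp]
        nlinarith [mul_le_mul_of_nonneg_right hx.2 ha])
    simpa using this
  set I := ∫ s in (0 : ℝ)..t, Real.exp (-2 * s * a)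
  have he := Real.exp_pos (-2 * t * a)
  have he1 : Real.exp (-2 * t * a) ≤ 1 := by
    rw [Real.exp_le_one_iff]
    nlinarith [mul_nonneg ht.le ha]
  have hp : 0 < 1 / t + a := by positivity
  have h4 : I / t ≤ 1 := (div_le_one ht).2 h2
  have h5 : Real.exp (-2 * t * a) ≤ I / t := by
    rw [le_div_iff₀ ht]
    linarith
  have h6 : I * (1 / t + a) = I / t + a * I := by ring
  constructor
  · rw [← div_eq_mul_inv, div_le_iff₀ hp, h6]
    linarith
  · rw [← div_eq_mul_inv, le_div_iff₀ hp, h6]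
    linarith

lemma aux_lint (a t c : ℝ) (ht : 0 < t) :
    ∫⁻ s in Set.Ioc (0 : ℝ) t, ENNReal.ofReal (Real.exp (-2 * s * a) * c)
      = ENNReal.ofReal (∫ s in (0 : ℝ)..t, Real.exp (-2 * s * a)) * ENNReal.ofReal c := by
  have hc : Continuous fun s : ℝ => Real.exp (-2 * s * a) := by fun_prop
  simp_rw [ENNReal.ofReal_mul (Real.exp_pos _).le]
  rw [lintegral_mul_const _ hc.measurable.ennreal_ofReal, intervalIntegral.integral_of_le ht.le,
    ofReal_integral_eq_lintegral_ofReal]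
  · exact (hc.intervalIntegrable 0 t).1
  · exact Filter.Eventually.of_forall fun _ => (Real.exp_pos _).le

/-- Corollary 3.2, analytic content: with `λ := t` the heat quasi-isometry gives
`(1/3) ⬝ ∫ f/((1/t) + Re Ψ) ≤ ∫_0^t ∫ e^{−2s Re Ψ} f dξ ds ≤ 4 ⬝ ∫ f/((1/t) + Re Ψ)`. -/
theorem stmt_1 (d : ℕ) (hd : 1 ≤ d)
    (Ψ : EuclideanSpace ℝ (Fin d) → ℂ) (hΨ : Measurable Ψ)
    (hre : ∀ ξ, 0 ≤ (Ψ ξ).re)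
    (f : EuclideanSpace ℝ (Fin d) → ℝ) (hf : Measurable f) (hf0 : ∀ ξ, 0 ≤ f ξ)
    (t : ℝ) (ht : 0 < t) :
    ENNReal.ofReal (1 / 3) *
        (∫⁻ ξ, ENNReal.ofReal (f ξ / (1 / t + (Ψ ξ).re)))
      ≤ ∫⁻ s in Set.Ioc (0 : ℝ) t,
          ∫⁻ ξ, ENNReal.ofReal (Real.exp (-2 * s * (Ψ ξ).re) * f ξ) ∧
    (∫⁻ s in Set.Ioc (0 : ℝ) t,
        ∫⁻ ξ, ENNReal.ofReal (Real.exp (-2 * s * (Ψ ξ).re) * f ξ))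
      ≤ 4 * (∫⁻ ξ, ENNReal.ofReal (f ξ / (1 / t + (Ψ ξ).re))) := by
  have hmr : Measurable fun ξ => (Ψ ξ).re := Complex.measurable_re.comp hΨ
  have hg : Measurable fun ξ => ENNReal.ofReal (f ξ / (1 / t + (Ψ ξ).re)) :=
    (hf.div (hmr.const_add _)).ennreal_ofReal
  have hsw : (∫⁻ s in Set.Ioc (0 : ℝ) t,
      ∫⁻ ξ, ENNReal.ofReal (Real.exp (-2 * s * (Ψ ξ).re) * f ξ)) =
      ∫⁻ ξ, ENNReal.ofReal (∫ s in (0 : ℝ)..t, Real.exp (-2 * s * (Ψ ξ).re))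
        * ENNReal.ofReal (f ξ) := by
    rw [lintegral_lintegral_swap]
    · exact lintegral_congr fun ξ => aux_lint _ _ _ ht
    · refine Measurable.aemeasurable ?_
      refine Measurable.ennreal_ofReal ?_
      exact (Real.measurable_exp.comp ((measurable_fst.const_mul (-2)).mul
        (hmr.comp measurable_snd))).mul (hf.comp measurable_snd)
  rw [hsw]
  constructor
  · rw [← lintegral_const_mul _ hg]
    refine lintegral_mono fun ξ => ?_
    rw [← ENNReal.ofReal_mul (by norm_num), ← ENNReal.ofReal_mul' (hf0 ξ)]
    refine ENNReal.ofReal_le_ofReal ?_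
    have := mul_le_mul_of_nonneg_right (aux_bounds _ t (hre ξ) ht).1 (hf0 ξ)
    rw [div_eq_mul_inv (f ξ)]
    linarith
  · rw [← lintegral_const_mul _ hg]
    refine lintegral_mono fun ξ => ?_
    have h4 : (4 : ENNReal) = ENNReal.ofReal 4 := by simp
    rw [h4, ← ENNReal.ofReal_mul' (hf0 ξ), ← ENNReal.ofReal_mul (by norm_num)]
    refine ENNReal.ofReal_le_ofReal ?_
    have := mul_le_mul_of_nonneg_right (aux_bounds _ t (hre ξ) ht).2 (hf0 ξ)
    rw [div_eq_mul_inv (f ξ)]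
    linarith
end

section
/- Let d ≥ 1, let Ψ : ℝ^d → (0,∞) be measurable, and let f : ℝ^d → [0,∞) be measurable. Then for every t ≥ 0, (t/4) · ∫_{ℝ^d} f(ξ)/((1/t²) + Ψ(ξ)) dξ ≤ ∫_0^t ∫_{ℝ^d} (sin(√(Ψ(ξ)) · s))² / Ψ(ξ) · f(ξ) dξ ds ≤ 2t · ∫_{ℝ^d} f(ξ)/((1/t²) + Ψ(ξ)) dξ. -/
open MeasureTheory


theorem aux_sin (x : ℝ) (hx : 0 < x) :
    2 * (Real.sin x * Real.cos x) * (1 + x ^ 2) ≤ x * (2 + x ^ 2) * 1 := by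
  rcases le_total x 1 with h | h
  · have h1 := Real.sin_le hx.le
    have hb := Real.cos_bound (x := x) (by rw [abs_of_pos hx]; exact h)
    rw [abs_of_pos hx] at hb
    have h2 := (abs_le.mp hb).2
    have h3 : 0 ≤ Real.cos x := (Real.cos_pos_of_le_one (by rw [abs_of_pos hx]; exact h)).le
    have h4 : Real.sin x * Real.cos x ≤ x * (1 - x ^ 2 / 2 + x ^ 4 * (5 / 96)) := by
      apply mul_le_mul h1 (by linarith) h3 hx.le
    have h5 : x ^ 2 ≤ 1 := by nlinarith
    have h6 : 2 * (1 - x ^ 2 / 2 + x ^ 4 * (5 / 96)) * (1 + x ^ 2) ≤ 2 + x ^ 2 := by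
      have : 0 ≤ x ^ 4 * (1 - x ^ 2) := mul_nonneg (by positivity) (by linarith)
      have : 0 ≤ x ^ 4 := by positivity
      nlinarith
    have h7 := mul_le_mul_of_nonneg_left h6 hx.le
    have h8 := mul_le_mul_of_nonneg_right h4 (by positivity : 0 ≤ 2 * (1 + x ^ 2))
    nlinarith
  · have h1 : 2 * (Real.sin x * Real.cos x) ≤ 1 := by
      nlinarith [sq_nonneg (Real.sin x - Real.cos x), Real.sin_sq_add_cos_sq x]
    have h8 := mul_le_mul_of_nonneg_right h1 (by positivity : 0 ≤ 1 + x ^ 2)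
    nlinarith [mul_le_mul_of_nonneg_right h (by positivity : 0 ≤ x ^ 2)]

theorem aux_int (a t : ℝ) (ha : 0 < a) :
    ∫ s in (0:ℝ)..t, Real.sin (a * s) ^ 2
      = (a * t - Real.sin (a * t) * Real.cos (a * t)) / (2 * a) := by
  rw [intervalIntegral.integral_comp_mul_left (fun u => Real.sin u ^ 2) ha.ne', integral_sin_sq]
  simp
  field_simp
  ring

theorem aux_lower (a t : ℝ) (ha : 0 < a) (ht : 0 < t) :
    t / 4 * (1 / (1 / t ^ 2 + a ^ 2)) ≤ (∫ s in (0:ℝ)..t, Real.sin (a * s) ^ 2) / a ^ 2 := by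
  rw [aux_int a t ha]
  have h := aux_sin (a * t) (by positivity)
  have e : t / 4 * (1 / (1 / t ^ 2 + a ^ 2)) = t ^ 3 / (4 * (1 + (a * t) ^ 2)) := by
    field_simp
  rw [e, div_div, div_le_div_iff₀ (by positivity) (by positivity)]
  have e2 : t ^ 3 * (2 * a * a ^ 2) = 2 * (a * t) ^ 3 := by ring
  rw [e2]
  generalize Real.sin (a * t) * Real.cos (a * t) = q at *
  generalize a * t = x at *
  nlinarith

theorem aux_upper (a t s : ℝ) (ha : 0 < a) (hs : 0 < s) (hst : s ≤ t) :
    Real.sin (a * s) ^ 2 / a ^ 2 ≤ 2 * (1 / (1 / t ^ 2 + a ^ 2)) := by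
  have ht : 0 < t := hs.trans_le hst
  have e : 2 * (1 / (1 / t ^ 2 + a ^ 2)) = 2 * t ^ 2 / (1 + a ^ 2 * t ^ 2) := by
    field_simp
  rw [e, div_le_div_iff₀ (by positivity) (by positivity)]
  have h1 := Real.sin_sq_le_one (a * s)
  have h2 : Real.sin (a * s) ^ 2 ≤ a ^ 2 * t ^ 2 := by
    have h3 : Real.sin (a * s) ^ 2 ≤ (a * s) ^ 2 := by
      rw [sq_le_sq]; exact Real.abs_sin_le_abs
    have h4 : (a * s) ^ 2 ≤ (a * t) ^ 2 := by gcongr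
    nlinarith
  have h5 := mul_le_mul_of_nonneg_right h1 (by positivity : 0 ≤ a ^ 2 * t ^ 2)
  nlinarith

/-- Proposition 3.6 (wave quasi-isometry), analytic content: for measurable
`Ψ : ℝ^d → (0,∞)` and measurable `f ≥ 0`, for every `t ≥ 0`,
`(t/4) ⬝ ∫ f/((1/t²) + Ψ) ≤ ∫_0^t ∫ sin²(√Ψ s)/Ψ ⬝ f dξ ds ≤ 2t ⬝ ∫ f/((1/t²) + Ψ)`. -/
theorem stmt_2 (d : ℕ) (hd : 1 ≤ d)
    (Ψ : EuclideanSpace ℝ (Fin d) → ℝ) (hΨ : Measurable Ψ)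
    (hpos : ∀ ξ, 0 < Ψ ξ)
    (f : EuclideanSpace ℝ (Fin d) → ℝ) (hf : Measurable f) (hf0 : ∀ ξ, 0 ≤ f ξ)
    (t : ℝ) (ht : 0 ≤ t) :
    ENNReal.ofReal (t / 4) *
        (∫⁻ ξ, ENNReal.ofReal (f ξ / (1 / t ^ 2 + Ψ ξ)))
      ≤ ∫⁻ s in Set.Ioc (0 : ℝ) t,
          ∫⁻ ξ, ENNReal.ofReal ((Real.sin (Real.sqrt (Ψ ξ) * s)) ^ 2 / Ψ ξ * f ξ) ∧
    (∫⁻ s in Set.Ioc (0 : ℝ) t,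
        ∫⁻ ξ, ENNReal.ofReal ((Real.sin (Real.sqrt (Ψ ξ) * s)) ^ 2 / Ψ ξ * f ξ))
      ≤ ENNReal.ofReal (2 * t) *
          (∫⁻ ξ, ENNReal.ofReal (f ξ / (1 / t ^ 2 + Ψ ξ))) := by
  rcases ht.eq_or_lt with rfl | ht
  · simp
  have hg : Measurable fun ξ => ENNReal.ofReal (f ξ / (1 / t ^ 2 + Ψ ξ)) := by fun_prop
  have hsq : ∀ ξ, Real.sqrt (Ψ ξ) ^ 2 = Ψ ξ := fun ξ => Real.sq_sqrt (hpos ξ).le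
  constructor
  · rw [lintegral_lintegral_swap (by
      apply Measurable.aemeasurable
      simp only [Function.uncurry_def]
      fun_prop), ← lintegral_const_mul _ hg]
    refine lintegral_mono fun ξ => ?_
    have hc : Continuous fun s : ℝ => Real.sin (Real.sqrt (Ψ ξ) * s) ^ 2 / Ψ ξ * f ξ := by
      fun_prop
    rw [← ofReal_integral_eq_lintegral_ofReal
      (hc.integrableOn_Ioc) (Filter.Eventually.of_forall fun s =>
        mul_nonneg (div_nonneg (sq_nonneg _) (hpos ξ).le) (hf0 ξ)),
      ← ENNReal.ofReal_mul (by positivity), ← intervalIntegral.integral_of_le ht.le]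
    apply ENNReal.ofReal_le_ofReal
    rw [intervalIntegral.integral_mul_const, intervalIntegral.integral_div]
    have h := aux_lower _ t (Real.sqrt_pos.mpr (hpos ξ)) ht
    rw [hsq] at h
    have h' := mul_le_mul_of_nonneg_right h (hf0 ξ)
    refine le_trans (le_of_eq ?_) h'
    ring
  · have key : ∀ s ∈ Set.Ioc (0:ℝ) t,
        (∫⁻ ξ, ENNReal.ofReal ((Real.sin (Real.sqrt (Ψ ξ) * s)) ^ 2 / Ψ ξ * f ξ)) ≤
        ENNReal.ofReal 2 * ∫⁻ ξ, ENNReal.ofReal (f ξ / (1 / t ^ 2 + Ψ ξ)) := by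
      intro s hs
      rw [← lintegral_const_mul _ hg]
      refine lintegral_mono fun ξ => ?_
      rw [← ENNReal.ofReal_mul (by positivity)]
      apply ENNReal.ofReal_le_ofReal
      have h := aux_upper _ t s (Real.sqrt_pos.mpr (hpos ξ)) hs.1 hs.2
      rw [hsq] at h
      have h' := mul_le_mul_of_nonneg_right h (hf0 ξ)
      refine h'.trans (le_of_eq ?_)
      ring
    refine (setLIntegral_mono measurable_const key).trans (le_of_eq ?_)
    rw [setLIntegral_const, Real.volume_Ioc, sub_zero, ENNReal.ofReal_mul (by norm_num)]
    ring
end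

section
/- Let g : [0,∞) → [0,∞) be Borel measurable and nonincreasing. Then for all t > 0 and λ > 0, (1 − e^{−2t/λ}) · ∫_0^∞ e^{−2s/λ} g(s) ds ≤ ∫_0^t g(s) ds ≤ e^{2t/λ} · ∫_0^∞ e^{−2s/λ} g(s) ds. Moreover, the upper bound ∫_0^t g(s) ds ≤ e^{2t/λ} ∫_0^∞ e^{−2s/λ} g(s) ds holds for every Borel measurable g : [0,∞) → [0,∞), without assuming monotonicity. -/
open MeasureTheory

/-- Lemma 3.3: for nonincreasing measurable `g : [0,∞) → [0,∞)` and `t, λ > 0`,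
`(1 − e^{−2t/λ}) ∫_0^∞ e^{−2s/λ} g(s) ds ≤ ∫_0^t g(s) ds ≤ e^{2t/λ} ∫_0^∞ e^{−2s/λ} g(s) ds`,
and the upper bound holds for every measurable nonnegative `g` without monotonicity. -/
theorem stmt_3 (t lam : ℝ) (ht : 0 < t) (hlam : 0 < lam) :
    (∀ g : ℝ → ℝ, Measurable g → (∀ s ∈ Set.Ici (0 : ℝ), 0 ≤ g s) →
      AntitoneOn g (Set.Ici 0) →
      ENNReal.ofReal (1 - Real.exp (-2 * t / lam)) *
          (∫⁻ s in Set.Ioi (0 : ℝ), ENNReal.ofReal (Real.exp (-2 * s / lam) * g s))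
        ≤ ∫⁻ s in Set.Ioc (0 : ℝ) t, ENNReal.ofReal (g s)) ∧
    (∀ g : ℝ → ℝ, Measurable g → (∀ s ∈ Set.Ici (0 : ℝ), 0 ≤ g s) →
      (∫⁻ s in Set.Ioc (0 : ℝ) t, ENNReal.ofReal (g s))
        ≤ ENNReal.ofReal (Real.exp (2 * t / lam)) *
            (∫⁻ s in Set.Ioi (0 : ℝ), ENNReal.ofReal (Real.exp (-2 * s / lam) * g s))) := by
  constructor
  · intro g hg hpos hanti
    have hq1 : Real.exp (-2 * t / lam) ≤ 1 := by
      rw [Real.exp_le_one_iff]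
      exact div_nonpos_of_nonpos_of_nonneg (by linarith) hlam.le
    by_cases hR : (∫⁻ s in Set.Ioc (0 : ℝ) t, ENNReal.ofReal (g s)) = ⊤
    · rw [hR]; exact le_top
    have hsplit : (∫⁻ s in Set.Ioi (0 : ℝ), ENNReal.ofReal (Real.exp (-2 * s / lam) * g s))
        = (∫⁻ s in Set.Ioc (0 : ℝ) t, ENNReal.ofReal (Real.exp (-2 * s / lam) * g s))
          + ∫⁻ s in Set.Ioi t, ENNReal.ofReal (Real.exp (-2 * s / lam) * g s) := by
      rw [← Set.Ioc_union_Ioi_eq_Ioi ht.le]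
      exact lintegral_union measurableSet_Ioi (Set.Ioc_disjoint_Ioi le_rfl)
    have hA : (∫⁻ s in Set.Ioc (0 : ℝ) t, ENNReal.ofReal (Real.exp (-2 * s / lam) * g s))
        ≤ ∫⁻ s in Set.Ioc (0 : ℝ) t, ENNReal.ofReal (g s) := by
      refine setLIntegral_mono' measurableSet_Ioc fun s hs => ENNReal.ofReal_le_ofReal ?_
      have h1 : Real.exp (-2 * s / lam) ≤ 1 := by
        rw [Real.exp_le_one_iff]
        exact div_nonpos_of_nonpos_of_nonneg (by linarith [hs.1]) hlam.le
      exact mul_le_of_le_one_left (hpos s hs.1.le) h1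
    have hBfin : (∫⁻ s in Set.Ioi t, ENNReal.ofReal (Real.exp (-2 * s / lam) * g s)) < ⊤ := by
      have hint : IntegrableOn (fun s : ℝ => Real.exp (-(2 / lam) * s) * g t) (Set.Ioi t) :=
        (exp_neg_integrableOn_Ioi t (by positivity)).mul_const _
      refine lt_of_le_of_lt ?_ hint.lintegral_lt_top
      refine setLIntegral_mono' measurableSet_Ioi fun s hs => ENNReal.ofReal_le_ofReal ?_
      have hs' : t < s := hs
      have e : -2 * s / lam = -(2 / lam) * s := by ring
      rw [e]
      exact mul_le_mul_of_nonneg_left (hanti ht.le (ht.trans hs').le hs'.le) (Real.exp_pos _).le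
    have hB : (∫⁻ s in Set.Ioi t, ENNReal.ofReal (Real.exp (-2 * s / lam) * g s))
        ≤ ENNReal.ofReal (Real.exp (-2 * t / lam)) *
          ∫⁻ s in Set.Ioi (0 : ℝ), ENNReal.ofReal (Real.exp (-2 * s / lam) * g s) := by
      have hpre : (fun s : ℝ => s + t) ⁻¹' Set.Ioi t = Set.Ioi 0 := by
        ext s; simp
      rw [← (measurePreserving_add_right (volume : Measure ℝ) t).setLIntegral_comp_preimage
        measurableSet_Ioi (by fun_prop), hpre, ← lintegral_const_mul _ (by fun_prop)]
      refine setLIntegral_mono' measurableSet_Ioi fun s hs => ?_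
      have hs' : 0 < s := hs
      rw [← ENNReal.ofReal_mul (Real.exp_pos _).le, ← mul_assoc, ← Real.exp_add]
      apply ENNReal.ofReal_le_ofReal
      have e : -2 * (s + t) / lam = -2 * t / lam + -2 * s / lam := by ring
      rw [e]
      exact mul_le_mul_of_nonneg_left (hanti hs'.le (add_pos hs' ht).le (by linarith))
        (Real.exp_pos _).le
    have hI : (∫⁻ s in Set.Ioi (0 : ℝ), ENNReal.ofReal (Real.exp (-2 * s / lam) * g s)) ≠ ⊤ := by
      rw [hsplit]
      exact ENNReal.add_ne_top.2 ⟨ne_top_of_le_ne_top hR hA, hBfin.ne⟩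
    rw [ENNReal.ofReal_sub _ (Real.exp_pos _).le, ENNReal.ofReal_one,
      ENNReal.sub_mul (fun _ _ => hI), one_mul, tsub_le_iff_right]
    calc _ = _ := hsplit
      _ ≤ _ := add_le_add hA hB
  · intro g hg hpos
    rw [← lintegral_const_mul _ (by fun_prop)]
    refine le_trans ?_ (lintegral_mono_set (fun x (hx : x ∈ Set.Ioc 0 t) => hx.1))
    refine setLIntegral_mono' measurableSet_Ioc fun s hs => ?_
    rw [← ENNReal.ofReal_mul (Real.exp_pos _).le, ← mul_assoc, ← Real.exp_add]
    apply ENNReal.ofReal_le_ofReal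
    apply le_mul_of_one_le_left (hpos s hs.1.le)
    rw [Real.one_le_exp_iff]
    have e : 2 * t / lam + -2 * s / lam = 2 * (t - s) / lam := by ring
    rw [e]
    exact div_nonneg (by linarith [hs.2]) hlam.le
end

section
/- Let d ≥ 1, let Ψ : ℝ^d → (0,∞) be measurable, and let f : ℝ^d → [0,∞) be measurable. Then for every t ≥ 0 and ε > 0, ∫_0^t ∫_{ℝ^d} |sin(√(Ψ(ξ))·(r+ε)) − sin(√(Ψ(ξ))·r)|² / Ψ(ξ) · f(ξ) dξ dr + ∫_0^ε ∫_{ℝ^d} sin²(√(Ψ(ξ))·r)/Ψ(ξ) · f(ξ) dξ dr ≤ (8t + 6ε) · ∫_{ℝ^d} f(ξ)/((1/ε²) + Ψ(ξ)) dξ. -/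
open MeasureTheory

/-- If `D ≤ C` and `D ≤ ε² Ψ`, then `D/Ψ * f ≤ (1 + C) * (f/(1/ε² + Ψ))`. -/
lemma aux_pt (D C p ε f : ℝ) (hp : 0 < p) (hε : 0 < ε) (hf : 0 ≤ f)
    (h1 : D ≤ C) (h2 : D ≤ ε ^ 2 * p) :
    D / p * f ≤ (1 + C) * (f / (1 / ε ^ 2 + p)) := by
  have hq : 0 < 1 / ε ^ 2 + p := by positivity
  have key : D / p ≤ (1 + C) / (1 / ε ^ 2 + p) := by
    rw [div_le_div_iff₀ hp hq]
    have h3 : D * (1 / ε ^ 2) ≤ p := by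
      rw [mul_one_div, div_le_iff₀ (by positivity)]
      linarith
    nlinarith [mul_le_mul_of_nonneg_right h1 hp.le]
  calc D / p * f ≤ (1 + C) / (1 / ε ^ 2 + p) * f := mul_le_mul_of_nonneg_right key hf
    _ = _ := by ring

/-- Integrating a uniform bound over `(0, s]`. -/
lemma aux_int_s7 {α : Type*} [MeasurableSpace α] (μ : Measure α) (F : ℝ → α → ℝ) (g : α → ℝ)
    (s K K' : ℝ) (hs : 0 ≤ s) (hK : 0 ≤ K) (hKK : s * K ≤ K')
    (h : ∀ r ∈ Set.Ioc (0 : ℝ) s, ∀ x, F r x ≤ K * g x) :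
    (∫⁻ r in Set.Ioc (0 : ℝ) s, ∫⁻ x, ENNReal.ofReal (F r x) ∂μ) ≤
      ENNReal.ofReal K' * ∫⁻ x, ENNReal.ofReal (g x) ∂μ := by
  calc (∫⁻ r in Set.Ioc (0 : ℝ) s, ∫⁻ x, ENNReal.ofReal (F r x) ∂μ)
      ≤ ∫⁻ _ in Set.Ioc (0 : ℝ) s, ENNReal.ofReal K * ∫⁻ x, ENNReal.ofReal (g x) ∂μ := by
        refine setLIntegral_mono' measurableSet_Ioc fun r hr => ?_
        rw [← lintegral_const_mul' _ _ ENNReal.ofReal_ne_top]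
        refine lintegral_mono fun x => ?_
        rw [← ENNReal.ofReal_mul hK]
        exact ENNReal.ofReal_le_ofReal (h r hr x)
    _ = ENNReal.ofReal (s * K) * ∫⁻ x, ENNReal.ofReal (g x) ∂μ := by
        rw [setLIntegral_const, Real.volume_Ioc, sub_zero, ENNReal.ofReal_mul hs]
        ring
    _ ≤ _ := by gcongr

lemma aux_sin_sub (a b : ℝ) : |Real.sin a - Real.sin b| ≤ |a - b| := by
  have h : Real.sin a - Real.sin b = 2 * Real.sin ((a - b) / 2) * Real.cos ((a + b) / 2) :=
    Real.sin_sub_sin a b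
  rw [h, abs_mul, abs_mul, abs_two]
  have h1 : |Real.sin ((a - b) / 2)| ≤ |(a - b) / 2| := Real.abs_sin_le_abs
  have h2 := Real.abs_cos_le_one ((a + b) / 2)
  rw [abs_div, abs_two] at h1
  nlinarith [abs_nonneg (Real.sin ((a - b) / 2)), abs_nonneg (Real.cos ((a + b) / 2))]

/-- Proposition 5.7, analytic content: for strictly positive measurable `Ψ` and
measurable `f ≥ 0`, for every `t ≥ 0` and `ε > 0`,
`∫_0^t ∫ |sin(√Ψ(r+ε)) − sin(√Ψ r)|²/Ψ ⬝ f dξ dr + ∫_0^ε ∫ sin²(√Ψ r)/Ψ ⬝ f dξ dr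
  ≤ (8t + 6ε) ∫ f/((1/ε²) + Ψ)`. -/
theorem stmt_7 (d : ℕ) (hd : 1 ≤ d)
    (Ψ : EuclideanSpace ℝ (Fin d) → ℝ) (hΨ : Measurable Ψ) (hpos : ∀ ξ, 0 < Ψ ξ)
    (f : EuclideanSpace ℝ (Fin d) → ℝ) (hf : Measurable f) (hf0 : ∀ ξ, 0 ≤ f ξ)
    (t ε : ℝ) (ht : 0 ≤ t) (hε : 0 < ε) :
    (∫⁻ r in Set.Ioc (0 : ℝ) t, ∫⁻ ξ,
        ENNReal.ofReal (|Real.sin (Real.sqrt (Ψ ξ) * (r + ε)) -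
            Real.sin (Real.sqrt (Ψ ξ) * r)| ^ 2 / Ψ ξ * f ξ)) +
      (∫⁻ r in Set.Ioc (0 : ℝ) ε, ∫⁻ ξ,
        ENNReal.ofReal ((Real.sin (Real.sqrt (Ψ ξ) * r)) ^ 2 / Ψ ξ * f ξ))
      ≤ ENNReal.ofReal (8 * t + 6 * ε) *
          (∫⁻ ξ, ENNReal.ofReal (f ξ / (1 / ε ^ 2 + Ψ ξ))) := by
  have e : ENNReal.ofReal (8 * t + 6 * ε) = ENNReal.ofReal (8 * t) + ENNReal.ofReal (6 * ε) :=
    ENNReal.ofReal_add (by positivity) (by positivity)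
  rw [e, add_mul]
  refine add_le_add ?_ ?_
  · refine aux_int_s7 volume _ (fun ξ => f ξ / (1 / ε ^ 2 + Ψ ξ)) t (1 + 4) _ ht (by norm_num)
      (by linarith) fun r _ ξ => ?_
    refine aux_pt _ 4 _ ε _ (hpos ξ) hε (hf0 ξ) ?_ ?_
    · rw [sq_abs]
      nlinarith [Real.sin_le_one (√(Ψ ξ) * (r + ε)), Real.neg_one_le_sin (√(Ψ ξ) * (r + ε)),
        Real.sin_le_one (√(Ψ ξ) * r), Real.neg_one_le_sin (√(Ψ ξ) * r)]
    · have h := aux_sin_sub (√(Ψ ξ) * (r + ε)) (√(Ψ ξ) * r)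
      have h2 := pow_le_pow_left₀ (abs_nonneg _) h 2
      refine h2.trans (le_of_eq ?_)
      rw [sq_abs]
      have := Real.sq_sqrt (hpos ξ).le
      calc _ = ε ^ 2 * √(Ψ ξ) ^ 2 := by ring
        _ = _ := by rw [this]
  · refine aux_int_s7 volume _ (fun ξ => f ξ / (1 / ε ^ 2 + Ψ ξ)) ε (1 + 1) _ hε.le (by norm_num)
      (by linarith) fun r hr ξ => ?_
    refine aux_pt _ 1 _ ε _ (hpos ξ) hε (hf0 ξ) (Real.sin_sq_le_one _) ?_
    have h2 : Real.sin (√(Ψ ξ) * r) ^ 2 ≤ (√(Ψ ξ) * r) ^ 2 :=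
      sq_le_sq.2 Real.abs_sin_le_abs
    rw [mul_pow, Real.sq_sqrt (hpos ξ).le] at h2
    have h3 : r ^ 2 ≤ ε ^ 2 := pow_le_pow_left₀ hr.1.le hr.2 2
    nlinarith [mul_le_mul_of_nonneg_left h3 (hpos ξ).le]
end

section
/- Let Ψ : ℝ → ℂ be measurable with Re Ψ(ξ) ≥ 0 for every ξ, and suppose ∫_ℝ dξ/(1 + Re Ψ(ξ)) < ∞. Then: (i) for every t > 0 the function ξ ↦ e^{−tΨ(ξ)} is Lebesgue integrable on ℝ; (ii) the function p(t,x) := (2π)^{−1} ∫_ℝ e^{−i x ξ − t Ψ(ξ)} dξ is continuous on (0,∞) × ℝ, and for all 0 < ε < T it is uniformly continuous on [ε,T] × ℝ. -/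
open MeasureTheory

lemma aux_exp_lip (a b : ℂ) (ha : a.re ≤ 0) (hb : b.re ≤ 0) :
    ‖Complex.exp a - Complex.exp b‖ ≤ ‖a - b‖ := by
  have hc : Convex ℝ {z : ℂ | z.re ≤ 0} := convex_halfSpace_re_le 0
  have := hc.norm_image_sub_le_of_norm_hasDerivWithin_le (f := Complex.exp)
    (f' := Complex.exp) (C := 1) (x := b) (y := a)
    (fun x _ => (Complex.hasDerivAt_exp x).hasDerivWithinAt)
    (fun x hx => by
      rw [Complex.norm_exp]
      exact Real.exp_le_one_iff.mpr hx) hb ha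
  simpa using this

lemma aux_exp_bound (ε t r : ℝ) (hε : 0 < ε) (ht : ε ≤ t) (hr : 0 ≤ r) :
    Real.exp (-(t * r)) ≤ (1 + 1 / ε) * (1 / (1 + r)) := by
  have h1 : Real.exp (-(t * r)) ≤ Real.exp (-(ε * r)) := by
    apply Real.exp_le_exp.mpr
    nlinarith
  refine h1.trans ?_
  rw [Real.exp_neg]
  have h2 : ε * r + 1 ≤ Real.exp (ε * r) := Real.add_one_le_exp _
  have hp : 0 < ε * r + 1 := by positivity
  calc (Real.exp (ε * r))⁻¹ ≤ (ε * r + 1)⁻¹ := inv_anti₀ hp h2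
    _ ≤ (1 + 1 / ε) * (1 / (1 + r)) := by
      rw [inv_eq_one_div, mul_one_div, div_le_div_iff₀ hp (by positivity)]
      have : (1 + 1 / ε) * (ε * r + 1) = 1 * (1 + r) + (ε * r + 1 / ε) := by
        field_simp
        ring
      rw [this]
      have : 0 ≤ ε * r + 1 / ε := by positivity
      linarith

lemma aux_norm (Ψ : ℝ → ℂ) (q : ℝ × ℝ) (ξ : ℝ) :
    ‖Complex.exp (-(Complex.I * (q.2 : ℂ) * (ξ : ℂ)) - (q.1 : ℂ) * Ψ ξ)‖
      = Real.exp (-(q.1 * (Ψ ξ).re)) := by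
  rw [Complex.norm_exp]
  simp

lemma aux_int_s9 (Ψ : ℝ → ℂ) (hΨ : Measurable Ψ) (hre : ∀ ξ, 0 ≤ (Ψ ξ).re)
    (hint : Integrable (fun ξ : ℝ => 1 / (1 + (Ψ ξ).re))) (q : ℝ × ℝ) (hq : 0 < q.1) :
    Integrable (fun ξ : ℝ =>
      Complex.exp (-(Complex.I * (q.2 : ℂ) * (ξ : ℂ)) - (q.1 : ℂ) * Ψ ξ)) := by
  refine (hint.const_mul (1 + 1 / q.1)).mono' ?_ ?_
  · apply Measurable.aestronglyMeasurable
    fun_prop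
  · refine Filter.Eventually.of_forall fun ξ => ?_
    rw [aux_norm]
    exact aux_exp_bound _ _ _ hq le_rfl (hre ξ)

lemma aux_uc (Ψ : ℝ → ℂ) (hΨ : Measurable Ψ) (hre : ∀ ξ, 0 ≤ (Ψ ξ).re)
    (hint : Integrable (fun ξ : ℝ => 1 / (1 + (Ψ ξ).re))) (ε : ℝ) (hε : 0 < ε) :
    UniformContinuousOn
        (fun q : ℝ × ℝ => (2 * Real.pi)⁻¹ •
          ∫ ξ : ℝ, Complex.exp (-(Complex.I * (q.2 : ℂ) * (ξ : ℂ)) - (q.1 : ℂ) * Ψ ξ))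
        (Set.Ici ε ×ˢ Set.univ) := by
  have key : UniformContinuousOn (fun q : ℝ × ℝ =>
          ∫ ξ : ℝ, Complex.exp (-(Complex.I * (q.2 : ℂ) * (ξ : ℂ)) - (q.1 : ℂ) * Ψ ξ))
        (Set.Ici ε ×ˢ Set.univ) := by
    unfold UniformContinuousOn
    set S : Set (ℝ × ℝ) := Set.Ici ε ×ˢ Set.univ with hS
    have hmem : ∀ᶠ p : (ℝ × ℝ) × (ℝ × ℝ) in
        uniformity (ℝ × ℝ) ⊓ Filter.principal (S ×ˢ S), ε ≤ p.1.1 ∧ ε ≤ p.2.1 := by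
      apply Filter.mem_inf_of_right
      rw [Filter.mem_principal]
      rintro p ⟨h1, h2⟩
      exact ⟨h1.1, h2.1⟩
    have hd : Filter.Tendsto (fun p : (ℝ × ℝ) × (ℝ × ℝ) => dist p.1 p.2)
        (uniformity (ℝ × ℝ) ⊓ Filter.principal (S ×ˢ S)) (nhds 0) :=
      (tendsto_uniformity_iff_dist_tendsto_zero.mp Filter.tendsto_id).mono_left inf_le_left
    rw [tendsto_uniformity_iff_dist_tendsto_zero]
    have hlim := tendsto_integral_filter_of_dominated_convergence
      (μ := (volume : Measure ℝ))
      (l := uniformity (ℝ × ℝ) ⊓ Filter.principal (S ×ˢ S))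
      (F := fun (p : (ℝ × ℝ) × (ℝ × ℝ)) (ξ : ℝ) =>
        Complex.exp (-(Complex.I * (p.1.2 : ℂ) * (ξ : ℂ)) - (p.1.1 : ℂ) * Ψ ξ)
        - Complex.exp (-(Complex.I * (p.2.2 : ℂ) * (ξ : ℂ)) - (p.2.1 : ℂ) * Ψ ξ))
      (f := fun _ => 0)
      (fun ξ => 2 * ((1 + 1 / ε) * (1 / (1 + (Ψ ξ).re))))
      (Filter.Eventually.of_forall fun p => by
        apply Measurable.aestronglyMeasurable
        fun_prop)
      (by
        filter_upwards [hmem] with p hp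
        refine Filter.Eventually.of_forall fun ξ => ?_
        refine (norm_sub_le _ _).trans ?_
        rw [aux_norm, aux_norm]
        have h1 := aux_exp_bound ε p.1.1 _ hε hp.1 (hre ξ)
        have h2 := aux_exp_bound ε p.2.1 _ hε hp.2 (hre ξ)
        linarith)
      ((hint.const_mul _).const_mul _)
      (Filter.Eventually.of_forall fun ξ => by
        rw [tendsto_zero_iff_norm_tendsto_zero]
        have hd2 := hd.mul_const (|ξ| + ‖Ψ ξ‖)
        rw [zero_mul] at hd2
        refine squeeze_zero' (Filter.Eventually.of_forall fun p => norm_nonneg _) ?_ hd2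
        filter_upwards [hmem] with p hp
        have hr := hre ξ
        refine (aux_exp_lip _ _ ?_ ?_).trans ?_
        · have := mul_nonneg (hε.le.trans hp.1) hr
          simpa using this
        · have := mul_nonneg (hε.le.trans hp.2) hr
          simpa using this
        · have e : -(Complex.I * (p.1.2 : ℂ) * (ξ : ℂ)) - (p.1.1 : ℂ) * Ψ ξ
              - (-(Complex.I * (p.2.2 : ℂ) * (ξ : ℂ)) - (p.2.1 : ℂ) * Ψ ξ)
              = -(Complex.I * ((p.1.2 - p.2.2 : ℝ) : ℂ) * (ξ : ℂ))
                - ((p.1.1 - p.2.1 : ℝ) : ℂ) * Ψ ξ := by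
            push_cast
            ring
          rw [e]
          refine (norm_sub_le _ _).trans ?_
          rw [norm_neg, norm_mul, norm_mul, norm_mul, Complex.norm_I, one_mul,
            Complex.norm_real, Complex.norm_real, Complex.norm_real, mul_add]
          have h1 : ‖p.1.2 - p.2.2‖ ≤ dist p.1 p.2 := by
            rw [← dist_eq_norm]
            exact le_max_right _ _
          have h2 : ‖p.1.1 - p.2.1‖ ≤ dist p.1 p.2 := by
            rw [← dist_eq_norm]
            exact le_max_left _ _
          rw [Real.norm_eq_abs ξ]
          gcongr)
    rw [integral_zero] at hlim
    have hlim' := hlim.norm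
    rw [norm_zero] at hlim'
    refine hlim'.congr' ?_
    filter_upwards [hmem] with p hp
    rw [integral_sub (aux_int_s9 Ψ hΨ hre hint p.1 (hε.trans_le hp.1))
      (aux_int_s9 Ψ hΨ hre hint p.2 (hε.trans_le hp.2)), dist_eq_norm]
  exact (uniformContinuous_const_smul ((2 * Real.pi)⁻¹ : ℝ)).comp_uniformContinuousOn key

/-- Lemma 8.1 (part): if `Re Ψ ≥ 0` and `∫ dξ/(1 + Re Ψ(ξ)) < ∞`, then
(i) `ξ ↦ e^{−tΨ(ξ)}` is integrable for each `t > 0`; (ii) the Fourier-inversion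
density `p(t,x) = (2π)⁻¹ ∫ e^{−ixξ − tΨ(ξ)} dξ` is continuous on `(0,∞) × ℝ`
and uniformly continuous on `[ε,T] × ℝ` for all `0 < ε < T`. -/
theorem stmt_9 (Ψ : ℝ → ℂ) (hΨ : Measurable Ψ) (hre : ∀ ξ, 0 ≤ (Ψ ξ).re)
    (hint : Integrable (fun ξ : ℝ => 1 / (1 + (Ψ ξ).re))) :
    (∀ t : ℝ, 0 < t → Integrable (fun ξ : ℝ => Complex.exp (-(t : ℂ) * Ψ ξ))) ∧
    ContinuousOn
      (fun q : ℝ × ℝ => (2 * Real.pi)⁻¹ •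
        ∫ ξ : ℝ, Complex.exp (-(Complex.I * (q.2 : ℂ) * (ξ : ℂ)) - (q.1 : ℂ) * Ψ ξ))
      (Set.Ioi 0 ×ˢ Set.univ) ∧
    (∀ ε T : ℝ, 0 < ε → ε < T →
      UniformContinuousOn
        (fun q : ℝ × ℝ => (2 * Real.pi)⁻¹ •
          ∫ ξ : ℝ, Complex.exp (-(Complex.I * (q.2 : ℂ) * (ξ : ℂ)) - (q.1 : ℂ) * Ψ ξ))
        (Set.Icc ε T ×ˢ Set.univ)) := by
  refine ⟨fun t ht => ?_, ?_, ?_⟩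
  · simpa using aux_int_s9 Ψ hΨ hre hint (t, 0) ht
  · intro q hq
    have hq1 : 0 < q.1 := hq.1
    have h := (aux_uc Ψ hΨ hre hint (q.1 / 2) (by positivity)).continuousOn
    refine (h.continuousAt ?_).continuousWithinAt
    exact prod_mem_nhds (Ici_mem_nhds (by linarith)) Filter.univ_mem
  · intro ε T hε _
    exact (aux_uc Ψ hΨ hre hint ε hε).mono (Set.prod_mono Set.Icc_subset_Ici_self le_rfl)
end

section
/- Let R : ℝ → [0,∞) be measurable with ∫_ℝ dξ/(1 + R(ξ)) < ∞. Then for every η > 0 there exists a constant C ∈ (0,∞) such that for all t ≥ 0, ∫_0^t ∫_ℝ e^{−2 s R(ξ)} dξ ds ≤ C e^{η t}. -/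
open MeasureTheory

/-- Lemma 8.1 (part): if `R : ℝ → [0,∞)` is measurable with `∫ dξ/(1 + R(ξ)) < ∞`,
then for every `η > 0` there is `C ∈ (0,∞)` with
`∫_0^t ∫ e^{−2sR(ξ)} dξ ds ≤ C e^{ηt}` for all `t ≥ 0`. -/
theorem stmt_10 (R : ℝ → ℝ) (hR : Measurable R) (hR0 : ∀ ξ, 0 ≤ R ξ)
    (hint : Integrable (fun ξ : ℝ => 1 / (1 + R ξ))) :
    ∀ η : ℝ, 0 < η → ∃ C : ℝ, 0 < C ∧ ∀ t : ℝ, 0 ≤ t →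
      (∫⁻ s in Set.Ioc (0 : ℝ) t, ∫⁻ ξ : ℝ, ENNReal.ofReal (Real.exp (-2 * s * R ξ)))
        ≤ ENNReal.ofReal (C * Real.exp (η * t)) := by
  intro η hη
  have hnn : ∀ ξ, 0 ≤ 1 / (1 + R ξ) := fun ξ => by have := hR0 ξ; positivity
  have hI : 0 ≤ ∫ ξ, 1 / (1 + R ξ) := integral_nonneg hnn
  refine ⟨(1 + 1 / η) * (∫ ξ, 1 / (1 + R ξ)) + 1, by positivity, fun t ht => ?_⟩
  rw [lintegral_lintegral_swap (by
    apply Measurable.aemeasurable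
    have h2 : Measurable fun p : ℝ × ℝ => R p.2 := hR.comp measurable_snd
    unfold Function.uncurry
    fun_prop)]
  have key : ∀ ξ, (∫⁻ s in Set.Ioc (0 : ℝ) t, ENNReal.ofReal (Real.exp (-2 * s * R ξ)))
      ≤ ENNReal.ofReal (Real.exp (η * t) * (1 + 1 / η) * (1 / (1 + R ξ))) := by
    intro ξ
    have hr := hR0 ξ
    have ha : -(η + 2 * R ξ) < 0 := by linarith
    calc (∫⁻ s in Set.Ioc (0 : ℝ) t, ENNReal.ofReal (Real.exp (-2 * s * R ξ)))
        ≤ ∫⁻ s in Set.Ioc (0 : ℝ) t,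
            ENNReal.ofReal (Real.exp (η * t) * Real.exp (-(η + 2 * R ξ) * s)) := by
          refine setLIntegral_mono' measurableSet_Ioc fun s hs => ?_
          apply ENNReal.ofReal_le_ofReal
          rw [← Real.exp_add]
          apply Real.exp_le_exp.mpr
          nlinarith [mul_le_mul_of_nonneg_left hs.2 hη.le]
      _ ≤ ∫⁻ s in Set.Ioi (0 : ℝ),
            ENNReal.ofReal (Real.exp (η * t) * Real.exp (-(η + 2 * R ξ) * s)) :=
          lintegral_mono_set Set.Ioc_subset_Ioi_self
      _ = ENNReal.ofReal (∫ s in Set.Ioi (0 : ℝ),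
            Real.exp (η * t) * Real.exp (-(η + 2 * R ξ) * s)) := by
          rw [ofReal_integral_eq_lintegral_ofReal]
          · exact (integrableOn_exp_mul_Ioi ha 0).const_mul _
          · exact Filter.Eventually.of_forall fun s => by positivity
      _ ≤ _ := by
          apply ENNReal.ofReal_le_ofReal
          rw [integral_const_mul, integral_exp_mul_Ioi ha, mul_assoc]
          apply mul_le_mul_of_nonneg_left _ (Real.exp_pos _).le
          rw [mul_zero, Real.exp_zero, neg_div_neg_eq, mul_one_div,
            div_le_div_iff₀ (by linarith) (by linarith)]
          have h1 : (1 + 1 / η) * (η + 2 * R ξ) = η + 1 + 2 * R ξ + 2 * R ξ / η := by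
            field_simp
            ring
          have h2 : 0 ≤ 2 * R ξ / η := by positivity
          linarith
  refine (lintegral_mono key).trans ?_
  rw [← ofReal_integral_eq_lintegral_ofReal (hint.const_mul _)
    (Filter.Eventually.of_forall fun ξ => mul_nonneg (by positivity) (hnn ξ)),
    integral_const_mul]
  apply ENNReal.ofReal_le_ofReal
  nlinarith [Real.exp_pos (η * t)]
end

section
/- Let d ≥ 1, let R : ℝ^d → [0,∞) be measurable, and let γ > d. Suppose there exist constants M > 0 and c > 0 such that R(ξ) ≥ c‖ξ‖^γ whenever ‖ξ‖ ≥ M. Then there exists a constant C ∈ (0,∞) such that for every ε ∈ (0,1], ∫_{ℝ^d} dξ/((1/ε) + R(ξ)) ≤ C · ε^{1 − d/γ}. -/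
open MeasureTheory

/-- Key estimate in Theorem 2.7: if `R : ℝ^d → [0,∞)` is measurable, `γ > d`,
and `R(ξ) ≥ c‖ξ‖^γ` for `‖ξ‖ ≥ M` (some `M, c > 0`), then there is `C ∈ (0,∞)`
with `∫ dξ/((1/ε) + R(ξ)) ≤ C ε^{1 − d/γ}` for every `ε ∈ (0,1]`. -/
theorem stmt_11 (d : ℕ) (hd : 1 ≤ d)
    (R : EuclideanSpace ℝ (Fin d) → ℝ) (hR : Measurable R) (hR0 : ∀ ξ, 0 ≤ R ξ)
    (γ : ℝ) (hγ : (d : ℝ) < γ)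
    (M c : ℝ) (hM : 0 < M) (hc : 0 < c)
    (hlb : ∀ ξ, M ≤ ‖ξ‖ → c * ‖ξ‖ ^ γ ≤ R ξ) :
    ∃ C : ℝ, 0 < C ∧ ∀ ε : ℝ, 0 < ε → ε ≤ 1 →
      (∫⁻ ξ, ENNReal.ofReal (1 / (1 / ε + R ξ)))
        ≤ ENNReal.ofReal (C * ε ^ (1 - (d : ℝ) / γ)) := by
  have hγ0 : 0 < γ := lt_of_le_of_lt (Nat.cast_nonneg d) hγ
  let E := EuclideanSpace ℝ (Fin d)
  have hfin : ((Module.finrank ℝ E : ℕ) : ℝ) < γ := by simpa [E] using hγ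
  let f : E → ℝ := fun x => (1 + ‖x‖) ^ (-γ)
  have hf : Integrable f (volume : Measure E) := integrable_one_add_norm hfin
  have hf0 : ∀ x, 0 ≤ f x := fun x => by positivity
  have hI0 : 0 ≤ ∫ x, f x := integral_nonneg hf0
  set K : ℝ := (1 + M) ^ γ + 2 ^ γ * (1 + 1 / c) with hK
  have hKpos : 0 < K := by positivity
  refine ⟨K * ((∫ x, f x) + 1), by positivity, fun ε hε hε1 => ?_⟩
  set s : ℝ := ε ^ (1 / γ) with hs
  have hs0 : 0 < s := by positivity
  have hs1 : s ≤ 1 := Real.rpow_le_one hε.le hε1 (by positivity)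
  have hsγ : s ^ γ = ε := by
    rw [hs, ← Real.rpow_mul hε.le, one_div_mul_cancel hγ0.ne', Real.rpow_one]
  have hpt : ∀ ξ : E, 1 / (1 / ε + R ξ) ≤ K * ε * f (s • ξ) := by
    intro ξ
    have hRξ := hR0 ξ
    have hn : ‖s • ξ‖ = s * ‖ξ‖ := by rw [norm_smul, Real.norm_of_nonneg hs0.le]
    have hx := norm_nonneg ξ
    have key : (1 + s * ‖ξ‖) ^ γ ≤ K * (1 + ε * R ξ) := by
      have hεR : 0 ≤ ε * R ξ := by positivity
      have h2 : (0:ℝ) < 2 ^ γ := by positivity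
      have hM' : (0:ℝ) < (1 + M) ^ γ := by positivity
      have hc' : 0 < 1 / c := by positivity
      rcases lt_or_ge ‖ξ‖ M with h | h
      · have h1 : (1 + s * ‖ξ‖) ^ γ ≤ (1 + M) ^ γ := by
          apply Real.rpow_le_rpow (by positivity) _ hγ0.le
          nlinarith
        have h3 : (1 + M) ^ γ ≤ K := by
          rw [hK]; have : 0 < (2:ℝ) ^ γ * (1 + 1 / c) := by positivity
          linarith
        nlinarith
      · have hl := hlb ξ h
        have ht : (s * ‖ξ‖) ^ γ ≤ (1 / c) * (ε * R ξ) := by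
          rw [Real.mul_rpow hs0.le hx, hsγ]
          have : ‖ξ‖ ^ γ ≤ 1 / c * R ξ := by
            rw [one_div, ← div_eq_inv_mul, le_div_iff₀ hc]; linarith
          nlinarith
        have h1 : (1 + s * ‖ξ‖) ^ γ ≤ 2 ^ γ * (1 + (s * ‖ξ‖) ^ γ) := by
          have h4 : 0 ≤ (s * ‖ξ‖) ^ γ := by positivity
          rcases le_total (s * ‖ξ‖) 1 with h5 | h5
          · have : (1 + s * ‖ξ‖) ^ γ ≤ 2 ^ γ :=
              Real.rpow_le_rpow (by positivity) (by linarith) hγ0.le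
            nlinarith
          · have : (1 + s * ‖ξ‖) ^ γ ≤ (2 * (s * ‖ξ‖)) ^ γ :=
              Real.rpow_le_rpow (by positivity) (by linarith) hγ0.le
            rw [Real.mul_rpow (by norm_num) (by positivity)] at this
            nlinarith
        calc (1 + s * ‖ξ‖) ^ γ ≤ 2 ^ γ * (1 + (s * ‖ξ‖) ^ γ) := h1
          _ ≤ 2 ^ γ * ((1 + 1 / c) * (1 + ε * R ξ)) := by
              gcongr
              nlinarith
          _ = (2 ^ γ * (1 + 1 / c)) * (1 + ε * R ξ) := by ring
          _ ≤ K * (1 + ε * R ξ) := by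
              gcongr
              rw [hK]; linarith
    have hp : 0 < (1 + s * ‖ξ‖) ^ γ := by positivity
    have e1 : 1 / (1 / ε + R ξ) = ε / (1 + ε * R ξ) := by field_simp
    simp only [f, hn]
    rw [e1, Real.rpow_neg (by positivity), ← div_eq_mul_inv,
      div_le_div_iff₀ (by positivity) hp]
    nlinarith
  have hint : Integrable (fun ξ : E => K * ε * f (s • ξ)) :=
    ((integrable_comp_smul_iff volume f hs0.ne').2 hf).const_mul _
  calc (∫⁻ ξ, ENNReal.ofReal (1 / (1 / ε + R ξ)))
      ≤ ∫⁻ ξ : E, ENNReal.ofReal (K * ε * f (s • ξ)) :=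
        lintegral_mono fun ξ => ENNReal.ofReal_le_ofReal (hpt ξ)
    _ = ENNReal.ofReal (∫ ξ : E, K * ε * f (s • ξ)) :=
        (ofReal_integral_eq_lintegral_ofReal hint
          (Filter.Eventually.of_forall fun ξ =>
            mul_nonneg (by positivity) (hf0 _))).symm
    _ ≤ _ := by
        apply ENNReal.ofReal_le_ofReal
        rw [integral_const_mul, Measure.integral_comp_smul_of_nonneg volume f s (hR := hs0.le)]
        have e2 : ε ^ (1 - (d : ℝ) / γ) = ε * (s ^ Module.finrank ℝ E)⁻¹ := by
          have : Module.finrank ℝ E = d := by simp [E]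
          rw [this, hs, ← Real.rpow_natCast, ← Real.rpow_mul hε.le, Real.rpow_sub hε,
            Real.rpow_one, div_eq_mul_inv, one_div_mul_eq_div]
        rw [e2, smul_eq_mul]
        have : 0 ≤ K * (ε * (s ^ Module.finrank ℝ E)⁻¹) := by positivity
        linarith
end

section
/- Let R : ℝ → [0,∞) be measurable and let γ ∈ (1,2]. Suppose there exist constants M > 0 and c > 0 such that R(ξ) ≥ c|ξ|^γ whenever |ξ| ≥ M. Then there exists a constant C ∈ (0,∞) such that for every r ∈ (0,1], ∫_ℝ (1 − cos(rξ))/(1 + R(ξ)) dξ ≤ C · r^{γ−1}. -/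
open MeasureTheory

lemma key_bound (γ : ℝ) (hγ2 : γ ≤ 2) (hγ1 : 1 < γ) (u : ℝ) :
    1 - Real.cos u ≤ 8 * |u| ^ γ * (1 + |u|) ^ (-γ) := by
  by_cases hu : u = 0
  · subst hu
    simp [Real.zero_rpow (by linarith : γ ≠ 0)]
  have ha : 0 < |u| := abs_pos.mpr hu
  have h1 : (|u| / (1 + |u|)) ^ (2 : ℝ) ≤ (|u| / (1 + |u|)) ^ γ :=
    Real.rpow_le_rpow_of_exponent_ge (by positivity)
      (by rw [div_le_one (by positivity)]; linarith) hγ2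
  have h2 : 8 * |u| ^ γ * (1 + |u|) ^ (-γ) = 8 * (|u| / (1 + |u|)) ^ γ := by
    rw [Real.div_rpow ha.le (by positivity), Real.rpow_neg (by positivity)]
    ring
  rw [h2]
  refine le_trans ?_ (mul_le_mul_of_nonneg_left h1 (by norm_num))
  rw [Real.rpow_two, div_pow, ← mul_div_assoc, le_div_iff₀ (by positivity)]
  have h3 := Real.one_sub_sq_div_two_le_cos (x := u)
  have h4 := Real.neg_one_le_cos u
  have h5 := Real.cos_le_one u
  have h6 : |u| ^ 2 = u ^ 2 := sq_abs u
  have h7 : (1 + |u|) ^ 2 ≤ 2 + 2 * u ^ 2 := by nlinarith [sq_nonneg (1 - |u|)]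
  rw [h6]
  have h8 : (1 - Real.cos u) * (1 + |u|) ^ 2 ≤ (1 - Real.cos u) * (2 + 2 * u ^ 2) :=
    mul_le_mul_of_nonneg_left h7 (by linarith)
  nlinarith [mul_nonneg (by linarith : 0 ≤ 1 + Real.cos u) (sq_nonneg u), sq_nonneg u]

/-- Spatial estimate in Theorem 2.7: if `R : ℝ → [0,∞)` is measurable, `γ ∈ (1,2]`,
and `R(ξ) ≥ c|ξ|^γ` for `|ξ| ≥ M` (some `M, c > 0`), then there is `C ∈ (0,∞)` with
`∫ (1 − cos(rξ))/(1 + R(ξ)) dξ ≤ C r^{γ−1}` for every `r ∈ (0,1]`. -/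
theorem stmt_12 (R : ℝ → ℝ) (hR : Measurable R) (hR0 : ∀ ξ, 0 ≤ R ξ)
    (γ : ℝ) (hγ1 : 1 < γ) (hγ2 : γ ≤ 2)
    (M c : ℝ) (hM : 0 < M) (hc : 0 < c)
    (hlb : ∀ ξ : ℝ, M ≤ |ξ| → c * |ξ| ^ γ ≤ R ξ) :
    ∃ C : ℝ, 0 < C ∧ ∀ r : ℝ, 0 < r → r ≤ 1 →
      (∫⁻ ξ : ℝ, ENNReal.ofReal ((1 - Real.cos (r * ξ)) / (1 + R ξ)))
        ≤ ENNReal.ofReal (C * r ^ (γ - 1)) := by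
  have hint : Integrable (fun x : ℝ => (1 + |x|) ^ (-γ)) := by
    have := integrable_one_add_norm (E := ℝ) (μ := volume) (r := γ) (by simpa using hγ1)
    simpa using this
  set K : ℝ := ∫ x : ℝ, (1 + |x|) ^ (-γ) with hK
  have hK0 : 0 ≤ K := integral_nonneg fun x => by positivity
  refine ⟨M ^ 3 + 8 / c * K, by positivity, fun r hr hr1 => ?_⟩
  have hi1 : Integrable ((Set.Icc (-M) M).indicator (fun _ : ℝ => r ^ 2 * M ^ 2 / 2)) := by
    rw [integrable_indicator_iff measurableSet_Icc]
    exact integrableOn_const (by simp)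
  have hi2 : Integrable (fun ξ : ℝ => 8 / c * r ^ γ * (1 + |r * ξ|) ^ (-γ)) :=
    (hint.comp_mul_left' hr.ne').const_mul _
  have hnn : ∀ ξ : ℝ, 0 ≤ (Set.Icc (-M) M).indicator (fun _ : ℝ => r ^ 2 * M ^ 2 / 2) ξ :=
    fun ξ => Set.indicator_nonneg (fun _ _ => by positivity) ξ
  have hpt : ∀ ξ : ℝ, (1 - Real.cos (r * ξ)) / (1 + R ξ) ≤
      (Set.Icc (-M) M).indicator (fun _ : ℝ => r ^ 2 * M ^ 2 / 2) ξ
        + 8 / c * r ^ γ * (1 + |r * ξ|) ^ (-γ) := by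
    intro ξ
    have h0 : 0 ≤ 1 - Real.cos (r * ξ) := by linarith [Real.cos_le_one (r * ξ)]
    have hR' := hR0 ξ
    by_cases hξ : M ≤ |ξ|
    · have hξ0 : 0 < |ξ| := by linarith
      have hl := hlb ξ hξ
      have hp : 0 < |ξ| ^ γ := Real.rpow_pos_of_pos hξ0 _
      have h1 : (1 - Real.cos (r * ξ)) / (1 + R ξ) ≤
          (8 * |r * ξ| ^ γ * (1 + |r * ξ|) ^ (-γ)) / (c * |ξ| ^ γ) :=
        div_le_div₀ (by positivity) (key_bound γ hγ2 hγ1 _) (by positivity) (by linarith)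
      have h2 : (8 * |r * ξ| ^ γ * (1 + |r * ξ|) ^ (-γ)) / (c * |ξ| ^ γ)
          = 8 / c * r ^ γ * (1 + |r * ξ|) ^ (-γ) := by
        have : |r * ξ| ^ γ = r ^ γ * |ξ| ^ γ := by
          rw [abs_mul, abs_of_pos hr, Real.mul_rpow hr.le hξ0.le]
        rw [this]
        field_simp
      linarith [hnn ξ]
    · push Not at hξ
      have hmem : ξ ∈ Set.Icc (-M) M := abs_le.mp hξ.le
      rw [Set.indicator_of_mem hmem]
      have h1 : (1 - Real.cos (r * ξ)) / (1 + R ξ) ≤ 1 - Real.cos (r * ξ) :=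
        div_le_self h0 (by linarith)
      have h2 := Real.one_sub_sq_div_two_le_cos (x := r * ξ)
      have h3 : ξ ^ 2 ≤ M ^ 2 := sq_le_sq' hmem.1 hmem.2
      have h4 : r ^ 2 * ξ ^ 2 ≤ r ^ 2 * M ^ 2 := mul_le_mul_of_nonneg_left h3 (by positivity)
      have h5 : 0 ≤ 8 / c * r ^ γ * (1 + |r * ξ|) ^ (-γ) := by positivity
      rw [mul_pow] at h2
      linarith
  refine (lintegral_mono fun ξ => ENNReal.ofReal_le_ofReal (hpt ξ)).trans ?_
  have hi3 : Integrable (fun ξ : ℝ =>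
      (Set.Icc (-M) M).indicator (fun _ : ℝ => r ^ 2 * M ^ 2 / 2) ξ
        + 8 / c * r ^ γ * (1 + |r * ξ|) ^ (-γ)) := hi1.add hi2
  rw [← ofReal_integral_eq_lintegral_ofReal hi3
    (Filter.Eventually.of_forall fun ξ => add_nonneg (hnn ξ) (by positivity))]
  apply ENNReal.ofReal_le_ofReal
  rw [integral_add hi1 hi2, integral_indicator measurableSet_Icc, setIntegral_const,
    integral_const_mul,
    Measure.integral_comp_mul_left (fun x : ℝ => (1 + |x|) ^ (-γ)) r, ← hK]
  have hv : volume.real (Set.Icc (-M) M) = 2 * M := by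
    rw [Real.volume_real_Icc_of_le (by linarith)]; ring
  rw [hv, abs_of_pos (inv_pos.mpr hr), smul_eq_mul, smul_eq_mul, Real.rpow_sub_one hr.ne']
  have h1 : r ^ 2 ≤ r ^ γ / r := by
    rw [← Real.rpow_sub_one hr.ne', ← Real.rpow_two]
    exact Real.rpow_le_rpow_of_exponent_ge hr hr1 (by linarith)
  have h2 := mul_le_mul_of_nonneg_left h1 (by positivity : 0 ≤ M ^ 3)
  have h3 : 8 / c * r ^ γ * (r⁻¹ * K) = 8 / c * K * (r ^ γ / r) := by ring
  rw [h3]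
  nlinarith
end

section
/- Let E be a real inner product space, φ ∈ E, and let P : [0,∞) → (E →L[ℝ] E) be a family of continuous linear operators satisfying: P(0) = id; P(s+t) = P(s) ∘ P(t) for all s, t ≥ 0; ⟨P(t)x, y⟩ = ⟨x, P(t)y⟩ for all t ≥ 0 and x, y ∈ E (self-adjointness); ‖P(t)x‖ ≤ ‖x‖ for all t ≥ 0 and x ∈ E (contraction); and t ↦ P(t)φ is continuous on [0,∞). Define A(t) := ∫_0^t ‖P(s)φ‖² ds and B(t) := 2∫_0^t ∫_u^t ⟨P(v−u)φ, φ⟩ dv du. Then for every t ≥ 0, (1/8)·t·A(t) ≤ B(t) ≤ 4t·A(t). -/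
open MeasureTheory
open scoped RealInnerProductSpace

theorem aux_14 (f : ℝ → ℝ) (hf : Continuous f) (ha : Antitone f) (h0 : ∀ x, 0 ≤ f x)
    (t : ℝ) (ht : 0 < t) :
    (1 / 8) * t * (∫ s in (0 : ℝ)..t, f (2 * s))
      ≤ 2 * ∫ x in (0 : ℝ)..t, ∫ v in (0 : ℝ)..x, f v ∧
    2 * (∫ x in (0 : ℝ)..t, ∫ v in (0 : ℝ)..x, f v)
      ≤ 4 * t * ∫ s in (0 : ℝ)..t, f (2 * s) := by
  have hG : Continuous (fun x => ∫ v in (0 : ℝ)..x, f v) :=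
    intervalIntegral.continuous_primitive (fun a b => hf.intervalIntegrable a b) 0
  set A := ∫ s in (0 : ℝ)..t, f (2 * s) with hA
  have hA0 : 0 ≤ A := intervalIntegral.integral_nonneg ht.le (fun s _ => h0 _)
  have hA2 : 2 * A = ∫ v in (0 : ℝ)..(2 * t), f v := by
    have := intervalIntegral.mul_integral_comp_mul_left (f := f) (a := 0) (b := t) 2
    rw [hA, this, mul_zero]
  have hA1 : A = t * ∫ r in (0 : ℝ)..1, f (2 * (t * r)) := by
    have := intervalIntegral.mul_integral_comp_mul_left
      (f := fun x => f (2 * x)) (a := 0) (b := 1) t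
    rw [this, mul_zero, mul_one]
  have hup : ∀ x ∈ Set.Icc 0 t, (∫ v in (0 : ℝ)..x, f v) ≤ 2 * A := by
    intro x hx
    rw [hA2]
    exact intervalIntegral.integral_mono_interval le_rfl hx.1 (by linarith [hx.2])
      (Filter.Eventually.of_forall h0) (hf.intervalIntegrable _ _)
  have hlow : ∀ x ∈ Set.Icc 0 t, x * (A / t) ≤ ∫ v in (0 : ℝ)..x, f v := by
    intro x hx
    have h1 := intervalIntegral.mul_integral_comp_mul_left (f := f) (a := 0) (b := 1) x
    rw [mul_zero, mul_one] at h1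
    rw [← h1]
    refine mul_le_mul_of_nonneg_left ?_ hx.1
    rw [hA1, mul_div_cancel_left₀ _ ht.ne']
    refine intervalIntegral.integral_mono_on zero_le_one
      (Continuous.intervalIntegrable (by fun_prop) _ _)
      (Continuous.intervalIntegrable (by fun_prop) _ _) ?_
    intro r hr
    apply ha
    nlinarith [mul_le_mul_of_nonneg_right hx.2 hr.1, mul_nonneg ht.le hr.1]
  have u := intervalIntegral.integral_mono_on (μ := volume) ht.le (hG.intervalIntegrable 0 t)
    (continuous_const.intervalIntegrable 0 t) hup
  have l := intervalIntegral.integral_mono_on (μ := volume) ht.le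
    (Continuous.intervalIntegrable (μ := volume) (u := fun x : ℝ => x * (A / t))
      (by fun_prop) 0 t) (hG.intervalIntegrable 0 t) hlow
  rw [intervalIntegral.integral_const, smul_eq_mul] at u
  rw [intervalIntegral.integral_mul_const, integral_id] at l
  have e : (t ^ 2 - 0 ^ 2) / 2 * (A / t) = t * A / 2 := by field_simp; ring
  rw [e] at l
  have := mul_nonneg ht.le hA0
  constructor <;> linarith

/-- Theorem 7.2 (Hilbert-space form): for a self-adjoint contraction semigroup `P`
on a real inner product space `E`, `φ ∈ E`, with `t ↦ P(t)φ` continuous on `[0,∞)`,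
setting `A(t) = ∫_0^t ‖P(s)φ‖² ds` and `B(t) = 2∫_0^t ∫_u^t ⟪P(v−u)φ, φ⟫ dv du`,
one has `(1/8) t A(t) ≤ B(t) ≤ 4 t A(t)` for every `t ≥ 0`. -/
theorem stmt_14 {E : Type*} [NormedAddCommGroup E] [InnerProductSpace ℝ E]
    (φ : E) (P : ℝ → (E →L[ℝ] E))
    (hid : P 0 = ContinuousLinearMap.id ℝ E)
    (hsemi : ∀ s t : ℝ, 0 ≤ s → 0 ≤ t → P (s + t) = (P s).comp (P t))
    (hsa : ∀ t : ℝ, 0 ≤ t → ∀ x y : E, ⟪P t x, y⟫ = ⟪x, P t y⟫)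
    (hcontr : ∀ t : ℝ, 0 ≤ t → ∀ x : E, ‖P t x‖ ≤ ‖x‖)
    (hcont : ContinuousOn (fun t => P t φ) (Set.Ici 0))
    (t : ℝ) (ht : 0 ≤ t) :
    (1 / 8) * t * (∫ s in (0 : ℝ)..t, ‖P s φ‖ ^ 2)
      ≤ 2 * ∫ u in (0 : ℝ)..t, ∫ v in u..t, ⟪P (v - u) φ, φ⟫ ∧
    2 * (∫ u in (0 : ℝ)..t, ∫ v in u..t, ⟪P (v - u) φ, φ⟫)
      ≤ 4 * t * ∫ s in (0 : ℝ)..t, ‖P s φ‖ ^ 2 := by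
  rcases ht.eq_or_lt with rfl | htp
  · simp
  have hsq : ∀ r : ℝ, 0 ≤ r → ⟪P (2 * r) φ, φ⟫ = ‖P r φ‖ ^ 2 := by
    intro r hr
    rw [two_mul, hsemi r r hr hr, ContinuousLinearMap.comp_apply, hsa r hr,
      real_inner_self_eq_norm_sq]
  have key := aux_14 (fun r => ⟪P (max r 0) φ, φ⟫) ?_ ?_ ?_ t htp
  · have e1 : (∫ s in (0 : ℝ)..t, ⟪P (max (2 * s) 0) φ, φ⟫)
        = ∫ s in (0 : ℝ)..t, ‖P s φ‖ ^ 2 := by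
      apply intervalIntegral.integral_congr
      intro s hs
      rw [Set.uIcc_of_le ht] at hs
      have : 0 ≤ 2 * s := by linarith [hs.1]
      simp only [max_eq_left this]
      exact hsq s hs.1
    have e2 : (∫ u in (0 : ℝ)..t, ∫ v in u..t, ⟪P (v - u) φ, φ⟫)
        = ∫ x in (0 : ℝ)..t, ∫ v in (0 : ℝ)..x, ⟪P (max v 0) φ, φ⟫ := by
      have h3 := intervalIntegral.integral_comp_sub_left
        (fun x => ∫ v in (0 : ℝ)..x, ⟪P (max v 0) φ, φ⟫) (a := 0) (b := t) t
      rw [sub_self, sub_zero] at h3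
      rw [← h3]
      apply intervalIntegral.integral_congr
      intro u hu
      rw [Set.uIcc_of_le ht] at hu
      have h4 := intervalIntegral.integral_comp_sub_right
        (fun v => ⟪P v φ, φ⟫) (a := u) (b := t) u
      rw [sub_self] at h4
      simp only
      rw [h4]
      apply intervalIntegral.integral_congr
      intro v hv
      rw [Set.uIcc_of_le (by linarith [hu.2])] at hv
      simp only [max_eq_left hv.1]
    rw [e2, ← e1]
    exact key
  · have h : Continuous (fun r : ℝ => P (max r 0) φ) :=
      hcont.comp_continuous (f := fun r : ℝ => max r 0) (by fun_prop)
        (fun r => le_max_right r 0)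
    exact h.inner continuous_const
  · intro a b hab
    change ⟪P (max b 0) φ, φ⟫ ≤ ⟪P (max a 0) φ, φ⟫
    have hm : max a 0 ≤ max b 0 := max_le_max_right 0 hab
    have ha : 0 ≤ max a 0 := le_max_right _ _
    generalize max a 0 = a' at *
    generalize max b 0 = b' at *
    have e1 := hsq (a' / 2) (by linarith)
    have e2 := hsq (b' / 2) (by linarith)
    rw [mul_div_cancel₀ _ (two_ne_zero)] at e1 e2
    simp only [e1, e2]
    have e3 : P (b' / 2) φ = P (b' / 2 - a' / 2) (P (a' / 2) φ) := by
      rw [← ContinuousLinearMap.comp_apply, ← hsemi _ _ (by linarith) (by linarith),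
        sub_add_cancel]
    rw [e3]
    gcongr
    exact hcontr _ (by linarith) _
  · intro x
    have e1 := hsq (max x 0 / 2) (by positivity)
    rw [mul_div_cancel₀ _ (two_ne_zero)] at e1
    simp only [e1]
    positivity
end

section
/- Let E be a real inner product space, φ ∈ E, and let P : [0,∞) → (E →L[ℝ] E) satisfy: P(0) = id; P(s+t) = P(s) ∘ P(t) for all s, t ≥ 0; ⟨P(t)x, y⟩ = ⟨x, P(t)y⟩ for all t ≥ 0 and x, y ∈ E; and t ↦ P(t)φ is continuous on [0,∞). Define A(t) := ∫_0^t ‖P(s)φ‖² ds and B(t) := 2∫_0^t ∫_u^t ⟨P(v−u)φ, φ⟩ dv du. Then for every t ≥ 0, B(t) = 4 ∫_0^t A(s/2) ds. -/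
open MeasureTheory
open scoped RealInnerProductSpace

/-- Proposition 7.4 (Hilbert-space form): for a self-adjoint semigroup `P` on a real
inner product space `E`, `φ ∈ E`, with `t ↦ P(t)φ` continuous on `[0,∞)`, setting
`A(t) = ∫_0^t ‖P(s)φ‖² ds` and `B(t) = 2∫_0^t ∫_u^t ⟪P(v−u)φ, φ⟫ dv du`, one has
`B(t) = 4 ∫_0^t A(s/2) ds` for every `t ≥ 0`. -/
theorem stmt_15 {E : Type*} [NormedAddCommGroup E] [InnerProductSpace ℝ E]
    (φ : E) (P : ℝ → (E →L[ℝ] E))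
    (hid : P 0 = ContinuousLinearMap.id ℝ E)
    (hsemi : ∀ s t : ℝ, 0 ≤ s → 0 ≤ t → P (s + t) = (P s).comp (P t))
    (hsa : ∀ t : ℝ, 0 ≤ t → ∀ x y : E, ⟪P t x, y⟫ = ⟪x, P t y⟫)
    (hcont : ContinuousOn (fun t => P t φ) (Set.Ici 0))
    (t : ℝ) (ht : 0 ≤ t) :
    2 * (∫ u in (0 : ℝ)..t, ∫ v in u..t, ⟪P (v - u) φ, φ⟫)
      = 4 * ∫ s in (0 : ℝ)..t, (∫ r in (0 : ℝ)..(s / 2), ‖P r φ‖ ^ 2) := by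
  have key : ∀ w : ℝ, 0 ≤ w → ⟪P w φ, φ⟫ = ‖P (w / 2) φ‖ ^ 2 := by
    intro w hw
    have h2 : 0 ≤ w / 2 := by linarith
    have h : P w = (P (w / 2)).comp (P (w / 2)) := by
      rw [← hsemi _ _ h2 h2, add_halves]
    rw [h, ContinuousLinearMap.comp_apply, hsa _ h2, real_inner_self_eq_norm_sq]
  have inner_eq : ∀ s : ℝ, 0 ≤ s →
      ∫ w in (0 : ℝ)..s, ⟪P w φ, φ⟫ = 2 * ∫ r in (0 : ℝ)..(s / 2), ‖P r φ‖ ^ 2 := by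
    intro s hs
    have h1 : ∫ w in (0 : ℝ)..s, ⟪P w φ, φ⟫ = ∫ w in (0 : ℝ)..s, ‖P (w / 2) φ‖ ^ 2 := by
      apply intervalIntegral.integral_congr
      intro w hw
      rw [Set.uIcc_of_le hs] at hw
      exact key w hw.1
    rw [h1, intervalIntegral.integral_comp_div (fun r => ‖P r φ‖ ^ 2) (two_ne_zero)]
    simp
  have outer : ∫ u in (0 : ℝ)..t, ∫ v in u..t, ⟪P (v - u) φ, φ⟫
      = ∫ s in (0 : ℝ)..t, ∫ w in (0 : ℝ)..s, ⟪P w φ, φ⟫ := by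
    have h1 : ∀ u : ℝ, ∫ v in u..t, ⟪P (v - u) φ, φ⟫
        = ∫ w in (0 : ℝ)..(t - u), ⟪P w φ, φ⟫ := by
      intro u
      rw [intervalIntegral.integral_comp_sub_right (fun w => ⟪P w φ, φ⟫) u, sub_self]
    simp_rw [h1]
    rw [intervalIntegral.integral_comp_sub_left
      (fun s => ∫ w in (0 : ℝ)..s, ⟪P w φ, φ⟫) t, sub_self, sub_zero]
  have last : ∫ s in (0 : ℝ)..t, ∫ w in (0 : ℝ)..s, ⟪P w φ, φ⟫
      = ∫ s in (0 : ℝ)..t, 2 * ∫ r in (0 : ℝ)..(s / 2), ‖P r φ‖ ^ 2 := by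
    apply intervalIntegral.integral_congr
    intro s hs
    rw [Set.uIcc_of_le ht] at hs
    exact inner_eq s hs.1
  rw [outer, last, intervalIntegral.integral_const_mul]
  ring
end
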